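/- Under the stated hypotheses on G, if n ≥ 12 then the graph F obtained from G by deleting the edge v_2v_{n−1} and adding the edge v_1v_k satisfies q(F) > q(G). -/

import Mathlib

open Matrix

/-- The signless Laplacian `Q(G) = D(G) + A(G)` of a finite simple graph `G`. -/
noncomputable def signlessLaplacian {V : Type*} [Fintype V] (G : SimpleGraph V) :
    Matrix V V ℝ :=
  letI := Classical.decEq V
  letI : DecidableRel G.Adj := Classical.decRel _
  Matrix.diagonal (fun v => (G.degree v : ℝ)) + G.adjMatrix ℝ

/-- The `Q`-index of `G`: the largest eigenvalue of the signless Laplacian `Q(G)`. -/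
noncomputable def qIndex {V : Type*} [Fintype V] (G : SimpleGraph V) : ℝ :=
  letI := Classical.decEq V
  sSup (spectrum ℝ (signlessLaplacian G))

/-!
Let `x` be a nonnegative eigenvector of `Q(G)` for `q(G)`. Since `x ⬝ Q(G) x` is the sum of
`(x a + x b) ^ 2` over the edges `ab`, using `x` as a test vector for the graph with `ab` replaced
by `cd` shows that the `Q`-index increases as soon as `x a + x b < x c + x d`. Here this means
`x v₂ + x vₙ₋₁ < x v₁ + x vₖ`. The star at `vₖ` gives `q(G) ≥ d(vₖ) + 1 ≥ 10`, and a vertex whose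
closed neighbourhood lies in that of `vₖ` has weight at most `x vₖ`; with these two facts the
inequality follows linearly from the eigenvalue equations at `v₀`, `v₂` and `vₙ₋₁`.
-/

section LargestEigenvalue

variable {V : Type*} [Fintype V]

lemma dotProduct_mulVec_le_abs {A : Matrix V V ℝ} (hA : ∀ i j, i ≠ j → 0 ≤ A i j) (x : V → ℝ) :
    x ⬝ᵥ A *ᵥ x ≤ |x| ⬝ᵥ A *ᵥ |x| := by
  simp only [dotProduct, mulVec, Finset.mul_sum, Pi.abs_apply]
  refine Finset.sum_le_sum fun i _ => Finset.sum_le_sum fun j _ => ?_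
  rw [mul_left_comm, mul_left_comm |x i|, ← abs_mul]
  obtain rfl | hij := eq_or_ne i j
  · rw [abs_mul_self]
  · exact mul_le_mul_of_nonneg_left (le_abs_self _) (hA i j hij)

variable [DecidableEq V] {A : Matrix V V ℝ} {x : V → ℝ}

lemma posSemidef_sSup_spectrum_smul_one_sub (hA : A.IsHermitian) :
    (sSup (spectrum ℝ A) • (1 : Matrix V V ℝ) - A).PosSemidef := by
  rw [posSemidef_iff_isHermitian_and_spectrum_nonneg]
  refine ⟨(isHermitian_one.smul (.all _)).sub hA, ?_⟩
  rw [← Algebra.algebraMap_eq_smul_one, ← spectrum.singleton_sub_eq]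
  rintro _ ⟨_, rfl, μ, hμ, rfl⟩
  exact sub_nonneg.2 (le_csSup A.finite_real_spectrum.bddAbove hμ)

lemma dotProduct_sSup_spectrum_smul_one_sub_mulVec (A : Matrix V V ℝ) (x : V → ℝ) :
    x ⬝ᵥ (sSup (spectrum ℝ A) • (1 : Matrix V V ℝ) - A) *ᵥ x =
      sSup (spectrum ℝ A) * (x ⬝ᵥ x) - x ⬝ᵥ A *ᵥ x := by
  rw [sub_mulVec, smul_mulVec, one_mulVec, dotProduct_sub, dotProduct_smul, smul_eq_mul]

lemma dotProduct_mulVec_le_sSup_spectrum_mul (hA : A.IsHermitian) (x : V → ℝ) :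
    x ⬝ᵥ A *ᵥ x ≤ sSup (spectrum ℝ A) * (x ⬝ᵥ x) := by
  rw [← sub_nonneg, ← dotProduct_sSup_spectrum_smul_one_sub_mulVec]
  exact (posSemidef_sSup_spectrum_smul_one_sub hA).dotProduct_mulVec_nonneg x

lemma mulVec_eq_sSup_spectrum_smul_of_le (hA : A.IsHermitian)
    (hx : sSup (spectrum ℝ A) * (x ⬝ᵥ x) ≤ x ⬝ᵥ A *ᵥ x) :
    A *ᵥ x = sSup (spectrum ℝ A) • x := by
  have hform : x ⬝ᵥ (sSup (spectrum ℝ A) • (1 : Matrix V V ℝ) - A) *ᵥ x = 0 := by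
    rw [dotProduct_sSup_spectrum_smul_one_sub_mulVec, sub_eq_zero]
    exact hx.antisymm (dotProduct_mulVec_le_sSup_spectrum_mul hA x)
  have hker := ((posSemidef_sSup_spectrum_smul_one_sub hA).dotProduct_mulVec_zero_iff x).1 hform
  rw [sub_mulVec, smul_mulVec, one_mulVec, sub_eq_zero] at hker
  exact hker.symm

lemma exists_mulVec_eq_sSup_spectrum_smul [Nonempty V] (hA : A.IsHermitian) :
    ∃ x ≠ 0, A *ᵥ x = sSup (spectrum ℝ A) • x := by
  have hmem : sSup (spectrum ℝ A) ∈ spectrum ℝ A :=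
    Set.Nonempty.csSup_mem ⟨_, hA.eigenvalues_mem_spectrum_real (Classical.arbitrary V)⟩
      A.finite_real_spectrum
  rw [spectrum.mem_iff, isUnit_iff_isUnit_det, isUnit_iff_ne_zero, not_not,
    ← exists_mulVec_eq_zero_iff, Algebra.algebraMap_eq_smul_one] at hmem
  obtain ⟨x, hx0, hx⟩ := hmem
  rw [sub_mulVec, smul_mulVec, one_mulVec, sub_eq_zero] at hx
  exact ⟨x, hx0, hx.symm⟩

lemma exists_nonneg_mulVec_eq_sSup_spectrum_smul [Nonempty V] (hA : A.IsHermitian)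
    (hA0 : ∀ i j, i ≠ j → 0 ≤ A i j) :
    ∃ x, 0 ≤ x ∧ x ≠ 0 ∧ A *ᵥ x = sSup (spectrum ℝ A) • x := by
  obtain ⟨y, hy0, hy⟩ := exists_mulVec_eq_sSup_spectrum_smul hA
  refine ⟨|y|, abs_nonneg y, fun h => hy0 (funext fun v => abs_eq_zero.1 (congrFun h v)),
    mulVec_eq_sSup_spectrum_smul_of_le hA ?_⟩
  calc sSup (spectrum ℝ A) * (|y| ⬝ᵥ |y|)
      = y ⬝ᵥ A *ᵥ y := by
        rw [hy, dotProduct_smul, smul_eq_mul]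
        simp only [dotProduct, Pi.abs_apply, abs_mul_abs_self]
    _ ≤ |y| ⬝ᵥ A *ᵥ |y| := dotProduct_mulVec_le_abs hA0 y

end LargestEigenvalue

section SignlessLaplacian

variable {V : Type*} [Fintype V] (G : SimpleGraph V)

lemma signlessLaplacian_eq_diagonal_add_adjMatrix [DecidableEq V] [DecidableRel G.Adj] :
    signlessLaplacian G = diagonal (fun v => (G.degree v : ℝ)) + G.adjMatrix ℝ := by
  unfold signlessLaplacian
  congr!

lemma signlessLaplacian_eq_incMatrix_mul_transpose [DecidableEq V] [DecidableRel G.Adj] :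
    signlessLaplacian G = G.incMatrix ℝ * (G.incMatrix ℝ)ᵀ := by
  ext v u
  rw [signlessLaplacian_eq_diagonal_add_adjMatrix, G.incMatrix_mul_transpose, of_apply,
    Matrix.add_apply, diagonal_apply, SimpleGraph.adjMatrix_apply]
  obtain rfl | hvu := eq_or_ne v u
  · simp only [if_true, SimpleGraph.irrefl, if_false, add_zero]
  · rw [if_neg hvu, if_neg hvu, zero_add]

lemma isHermitian_signlessLaplacian : (signlessLaplacian G).IsHermitian := by
  classical
  rw [signlessLaplacian_eq_incMatrix_mul_transpose, ← conjTranspose_eq_transpose_of_trivial]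
  exact isHermitian_mul_conjTranspose_self _

lemma signlessLaplacian_nonneg (v u : V) : 0 ≤ signlessLaplacian G v u := by
  classical
  rw [signlessLaplacian_eq_incMatrix_mul_transpose, G.incMatrix_mul_transpose, of_apply]
  split_ifs <;> positivity

lemma signlessLaplacian_mulVec_apply [DecidableRel G.Adj] (x : V → ℝ) (v : V) :
    (signlessLaplacian G *ᵥ x) v = ∑ u ∈ G.neighborFinset v, (x v + x u) := by
  classical
  rw [signlessLaplacian_eq_diagonal_add_adjMatrix, add_mulVec, Pi.add_apply, mulVec_diagonal,
    SimpleGraph.adjMatrix_mulVec_apply, Finset.sum_add_distrib, Finset.sum_const, nsmul_eq_mul,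
    SimpleGraph.card_neighborFinset_eq_degree]

lemma vecMul_incMatrix_apply [DecidableEq V] [DecidableRel G.Adj] (x : V → ℝ) {e : Sym2 V}
    (he : e ∈ G.edgeSet) : (x ᵥ* G.incMatrix ℝ) e = (e.map x).add := by
  induction e with | _ a b =>
  have hab : a ≠ b := G.ne_of_adj he
  simp only [vecMul, dotProduct, SimpleGraph.incMatrix_apply', SimpleGraph.mk'_mem_incidenceSet_iff,
    G.mem_edgeSet.1 he, true_and, mul_ite, mul_one, mul_zero, Sym2.map_mk, Sym2.add_mk]
  rw [← Finset.sum_filter, ← Finset.sum_pair hab]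
  congr 1
  ext v
  simp

lemma vecMul_incMatrix_apply_of_notMem [DecidableEq V] [DecidableRel G.Adj] (x : V → ℝ)
    {e : Sym2 V} (he : e ∉ G.edgeSet) : (x ᵥ* G.incMatrix ℝ) e = 0 :=
  Finset.sum_eq_zero fun v _ =>
    mul_eq_zero_of_right (x v) (G.incMatrix_of_notMem_incidenceSet fun h => he h.1)

lemma dotProduct_signlessLaplacian_mulVec [Fintype G.edgeSet] (x : V → ℝ) :
    x ⬝ᵥ signlessLaplacian G *ᵥ x = ∑ e ∈ G.edgeFinset, (e.map x).add ^ 2 := by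
  classical
  calc x ⬝ᵥ signlessLaplacian G *ᵥ x
      = ∑ e, (x ᵥ* G.incMatrix ℝ) e ^ 2 := by
        rw [signlessLaplacian_eq_incMatrix_mul_transpose, ← mulVec_mulVec, dotProduct_mulVec,
          mulVec_transpose]
        simp only [dotProduct, sq]
    _ = ∑ e ∈ G.edgeFinset, (x ᵥ* G.incMatrix ℝ) e ^ 2 := by
        refine (Finset.sum_subset (Finset.subset_univ _) fun e _ he => ?_).symm
        rw [SimpleGraph.mem_edgeFinset] at he
        rw [vecMul_incMatrix_apply_of_notMem G x he, zero_pow two_ne_zero]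
    _ = ∑ e ∈ G.edgeFinset, (e.map x).add ^ 2 :=
        Finset.sum_congr rfl fun e he => by
          rw [vecMul_incMatrix_apply G x (SimpleGraph.mem_edgeFinset.1 he)]

end SignlessLaplacian

section QIndex

variable {V : Type*} [Fintype V] (G : SimpleGraph V)

lemma dotProduct_signlessLaplacian_mulVec_le_qIndex_mul (x : V → ℝ) :
    x ⬝ᵥ signlessLaplacian G *ᵥ x ≤ qIndex G * (x ⬝ᵥ x) :=
  letI := Classical.decEq V
  dotProduct_mulVec_le_sSup_spectrum_mul (isHermitian_signlessLaplacian G) x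

lemma exists_nonneg_signlessLaplacian_mulVec_eq_qIndex_smul [Nonempty V] :
    ∃ x, 0 ≤ x ∧ x ≠ 0 ∧ signlessLaplacian G *ᵥ x = qIndex G • x :=
  letI := Classical.decEq V
  exists_nonneg_mulVec_eq_sSup_spectrum_smul (isHermitian_signlessLaplacian G)
    fun v u _ => signlessLaplacian_nonneg G v u

lemma sum_neighborFinset_sq_le_dotProduct_signlessLaplacian_mulVec [DecidableRel G.Adj]
    (x : V → ℝ) (v : V) :
    ∑ u ∈ G.neighborFinset v, (x v + x u) ^ 2 ≤ x ⬝ᵥ signlessLaplacian G *ᵥ x := by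
  classical
  rw [dotProduct_signlessLaplacian_mulVec]
  calc ∑ u ∈ G.neighborFinset v, (x v + x u) ^ 2
      = ∑ e ∈ (G.neighborFinset v).image fun u => s(v, u), (e.map x).add ^ 2 := by
        rw [Finset.sum_image fun _ _ _ _ => Sym2.congr_right.1]
        simp only [Sym2.map_mk, Sym2.add_mk]
    _ ≤ ∑ e ∈ G.edgeFinset, (e.map x).add ^ 2 := by
        refine Finset.sum_le_sum_of_subset_of_nonneg ?_ fun _ _ _ => sq_nonneg _
        rw [Finset.image_subset_iff]
        exact fun u hu => by simpa using hu

lemma degree_add_one_le_qIndex [DecidableRel G.Adj] {v : V} (hv : 0 < G.degree v) :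
    (G.degree v : ℝ) + 1 ≤ qIndex G := by
  classical
  set d : ℝ := (G.degree v : ℝ) with hd
  have hd0 : 0 < d := Nat.cast_pos.2 hv
  -- The eigenvector of the star at `v` for its largest eigenvalue `d + 1`.
  let x : V → ℝ := fun u => if u = v then d else if G.Adj v u then 1 else 0
  have hform : d * (d + 1) ^ 2 ≤ x ⬝ᵥ signlessLaplacian G *ᵥ x := by
    refine le_of_eq_of_le ?_ (sum_neighborFinset_sq_le_dotProduct_signlessLaplacian_mulVec G x v)
    have hx : ∀ u ∈ G.neighborFinset v, (x v + x u) ^ 2 = (d + 1) ^ 2 := fun u hu => by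
      rw [SimpleGraph.mem_neighborFinset] at hu
      simp only [x, if_true, hu.ne', if_false, hu]
    rw [Finset.sum_congr rfl hx, Finset.sum_const, nsmul_eq_mul,
      SimpleGraph.card_neighborFinset_eq_degree]
  have hnorm : x ⬝ᵥ x = d * (d + 1) := by
    have hx (u : V) : x u * x u = (if u = v then d * d else 0) + if G.Adj v u then 1 else 0 := by
      by_cases huv : u = v <;> simp [x, huv]
    simp only [dotProduct, hx, Finset.sum_add_distrib, Finset.sum_ite_eq', Finset.mem_univ, if_true,
      Finset.sum_boole, ← SimpleGraph.neighborFinset_eq_filter,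
      SimpleGraph.card_neighborFinset_eq_degree, ← hd]
    ring
  refine le_of_mul_le_mul_right ?_ (mul_pos hd0 (add_pos hd0 one_pos))
  calc (d + 1) * (d * (d + 1)) = d * (d + 1) ^ 2 := by ring
    _ ≤ qIndex G * (x ⬝ᵥ x) :=
        hform.trans (dotProduct_signlessLaplacian_mulVec_le_qIndex_mul G x)
    _ = qIndex G * (d * (d + 1)) := by rw [hnorm]

variable {G}

lemma qIndex_lt_qIndex_of_replace_edge {x : V → ℝ} (hx : signlessLaplacian G *ᵥ x = qIndex G • x)
    (hx0 : x ≠ 0) {a b c d : V} (hcd : Gᶜ.Adj c d) (hlt : (x a + x b) ^ 2 < (x c + x d) ^ 2) :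
    qIndex G <
      qIndex (SimpleGraph.fromEdgeSet ((G.edgeSet \ {s(a, b)}) ∪ {s(c, d)})) := by
  classical
  set F := SimpleGraph.fromEdgeSet ((G.edgeSet \ {s(a, b)}) ∪ {s(c, d)})
  have hF : F.edgeFinset = insert s(c, d) (G.edgeFinset.erase s(a, b)) := by
    ext e
    induction e with | _ u v =>
    rw [SimpleGraph.compl_adj] at hcd
    simp only [F, SimpleGraph.mem_edgeFinset, SimpleGraph.mem_edgeSet, SimpleGraph.fromEdgeSet_adj,
      Set.mem_union, Set.mem_sdiff, Set.mem_singleton_iff, Finset.mem_insert, Finset.mem_erase]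
    grind [G.ne_of_adj]
  have hnotMem : s(c, d) ∉ G.edgeFinset.erase s(a, b) := fun h =>
    hcd.2 (SimpleGraph.mem_edgeFinset.1 (Finset.mem_of_mem_erase h))
  have hedges : ∑ e ∈ G.edgeFinset, (e.map x).add ^ 2 ≤
      (x a + x b) ^ 2 + ∑ e ∈ G.edgeFinset.erase s(a, b), (e.map x).add ^ 2 := by
    by_cases hab : s(a, b) ∈ G.edgeFinset
    · rw [← Finset.add_sum_erase _ _ hab, Sym2.map_mk, Sym2.add_mk]
    · rw [Finset.erase_eq_of_notMem hab]
      exact le_add_of_nonneg_left (sq_nonneg _)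
  have hpos : 0 < x ⬝ᵥ x := by
    simpa using dotProduct_star_self_pos_iff.2 hx0
  refine lt_of_mul_lt_mul_right ?_ hpos.le
  calc qIndex G * (x ⬝ᵥ x)
      = ∑ e ∈ G.edgeFinset, (e.map x).add ^ 2 := by
        rw [← dotProduct_signlessLaplacian_mulVec, hx, dotProduct_smul, smul_eq_mul]
    _ < (x c + x d) ^ 2 + ∑ e ∈ G.edgeFinset.erase s(a, b), (e.map x).add ^ 2 := by linarith
    _ = x ⬝ᵥ signlessLaplacian F *ᵥ x := by
        rw [dotProduct_signlessLaplacian_mulVec, hF, Finset.sum_insert hnotMem, Sym2.map_mk,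
          Sym2.add_mk]
    _ ≤ qIndex F * (x ⬝ᵥ x) := dotProduct_signlessLaplacian_mulVec_le_qIndex_mul F x

end QIndex

section NonnegEigenvector

variable {V : Type*} [Fintype V] {G : SimpleGraph V} {q : ℝ} {x : V → ℝ}

lemma mul_apply_eq_sum_neighborFinset [DecidableRel G.Adj]
    (hx : signlessLaplacian G *ᵥ x = q • x) (v : V) :
    q * x v = ∑ u ∈ G.neighborFinset v, (x v + x u) := by
  rw [← signlessLaplacian_mulVec_apply, hx, Pi.smul_apply, smul_eq_mul]

lemma mul_apply_le_sum_of_neighborSet_subset (hx : signlessLaplacian G *ᵥ x = q • x) (hx0 : 0 ≤ x)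
    {v : V} (S : Multiset V) (hS : ∀ u ∈ G.neighborSet v, u ∈ S) :
    q * x v ≤ (S.map fun u => x v + x u).sum := by
  classical
  have hle : (G.neighborFinset v).val ≤ S :=
    (Multiset.le_iff_subset (G.neighborFinset v).nodup).2 fun u hu =>
      hS u ((G.mem_neighborFinset v u).1 hu)
  obtain ⟨T, rfl⟩ := Multiset.le_iff_exists_add.1 hle
  rw [mul_apply_eq_sum_neighborFinset hx, Multiset.map_add, Multiset.sum_add]
  refine le_add_of_nonneg_right (Multiset.sum_nonneg ?_)
  simp only [Multiset.mem_map, forall_exists_index, and_imp, forall_apply_eq_imp_iff₂]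
  exact fun u _ => add_nonneg (hx0 v) (hx0 u)

lemma apply_eq_zero_of_adj (hx : signlessLaplacian G *ᵥ x = q • x) (hx0 : 0 ≤ x) {v u : V}
    (hv : x v = 0) (hvu : G.Adj v u) : x u = 0 := by
  classical
  have hsum := mul_apply_eq_sum_neighborFinset hx v
  simp only [hv, mul_zero, zero_add] at hsum
  exact (Finset.sum_eq_zero_iff_of_nonneg fun w _ => hx0 w).1 hsum.symm u
    ((G.mem_neighborFinset v u).2 hvu)

lemma apply_pos_of_connected (hx : signlessLaplacian G *ᵥ x = q • x) (hx0 : 0 ≤ x) (hx1 : x ≠ 0)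
    (hG : G.Connected) (v : V) : 0 < x v := by
  refine (hx0 v).lt_of_ne' fun hv => hx1 (funext fun u => ?_)
  obtain ⟨p⟩ := hG.preconnected v u
  induction p with
  | nil => exact hv
  | cons hadj _ ih => exact ih (apply_eq_zero_of_adj hx hx0 hv hadj)

lemma apply_le_apply_of_closedNeighborSet_subset [DecidableRel G.Adj]
    (hx : signlessLaplacian G *ᵥ x = q • x) (hx0 : 0 ≤ x) {u v : V}
    (huv : insert u (G.neighborSet u) ⊆ insert v (G.neighborSet v))
    (hq : (G.degree v : ℝ) < q + 1) : x u ≤ x v := by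
  classical
  have hsum (w : V) :
      ∑ z ∈ insert w (G.neighborFinset w), (x w + x z) = (q + 2) * x w := by
    rw [Finset.sum_insert (G.notMem_neighborFinset_self w), ← mul_apply_eq_sum_neighborFinset hx]
    ring
  have hsub : insert u (G.neighborFinset u) ⊆ insert v (G.neighborFinset v) := by
    simpa [← Finset.coe_subset] using huv
  have hshift : ∑ z ∈ insert v (G.neighborFinset v), (x u + x z) =
      (q + 2) * x v + (G.degree v + 1) * (x u - x v) := by
    rw [← hsum v, Finset.sum_add_distrib, Finset.sum_add_distrib, Finset.sum_const,
      Finset.sum_const, Finset.card_insert_of_notMem (G.notMem_neighborFinset_self v),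
      SimpleGraph.card_neighborFinset_eq_degree]
    simp only [nsmul_eq_mul, Nat.cast_add, Nat.cast_one]
    ring
  have hle : (q + 2) * x u ≤ (q + 2) * x v + (G.degree v + 1) * (x u - x v) := by
    rw [← hsum u, ← hshift]
    exact Finset.sum_le_sum_of_subset_of_nonneg hsub fun z _ _ => add_nonneg (hx0 u) (hx0 z)
  by_contra! hlt
  have hprod : 0 < (q + 1 - G.degree v) * (x u - x v) := mul_pos (sub_pos.2 hq) (sub_pos.2 hlt)
  linarith

end NonnegEigenvector

section ClosedNeighborhood

variable {V : Type*} {G : SimpleGraph V} {u w z : V}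

lemma connected_of_forall_adj_or_adj (hwz : G.Adj w z)
    (h : ∀ u, u ≠ w → G.Adj w u ∨ G.Adj z u) : G.Connected := by
  refine G.connected_iff_exists_forall_reachable.2 ⟨w, fun u => ?_⟩
  obtain rfl | hu := eq_or_ne u w
  · rfl
  · exact (h u hu).elim SimpleGraph.Adj.reachable fun hzu => hwz.reachable.trans hzu.reachable

lemma closedNeighborSet_subset_of_compl_subset {S : Set V} (hS : Sᶜ ⊆ insert w (G.neighborSet w))
    (hu : u ∉ S) (hadj : ∀ v ∈ S, u ∉ G.neighborSet v) :
    insert u (G.neighborSet u) ⊆ insert w (G.neighborSet w) := by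
  refine Set.Subset.trans (Set.insert_subset hu fun v huv hv => hadj v hv ?_) hS
  exact G.adj_symm huv

lemma card_le_ncard_add_degree_add_one [Fintype V] [DecidableRel G.Adj] {S : Set V}
    (hS : Sᶜ ⊆ insert w (G.neighborSet w)) :
    Fintype.card V ≤ S.ncard + (G.degree w + 1) := by
  rw [← Nat.card_eq_fintype_card, ← Set.ncard_add_ncard_compl S,
    ← SimpleGraph.card_neighborFinset_eq_degree, ← Set.ncard_coe_finset,
    SimpleGraph.coe_neighborFinset]
  exact Nat.add_le_add_left ((Set.ncard_le_ncard hS).trans (Set.ncard_insert_le _ _)) _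

end ClosedNeighborhood

section EdgeReplacement

variable {V : Type*} [Fintype V] {G : SimpleGraph V} {v₀ v₁ v₂ a b w z : V}

lemma apply_add_apply_lt_of_neighborSet_subset {q : ℝ} {x : V → ℝ}
    (hx : signlessLaplacian G *ᵥ x = q • x) (hx0 : 0 ≤ x) (hq : 10 ≤ q)
    (h0 : G.neighborSet v₀ ⊆ {v₁, z}) (h2 : G.neighborSet v₂ ⊆ {v₁, a, w, z})
    (hz : G.neighborSet z ⊆ {v₀, v₁, v₂, w, b})
    (ha : x a ≤ x w) (hb : x b ≤ x w) (hw : 0 < x w) :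
    x v₂ + x z < x v₁ + x w := by
  have hmono (v : V) : 10 * x v ≤ q * x v := mul_le_mul_of_nonneg_right hq (hx0 v)
  have hv₀ := mul_apply_le_sum_of_neighborSet_subset hx hx0 {v₁, z} fun u hu => by
    simpa using h0 hu
  have hv₂ := mul_apply_le_sum_of_neighborSet_subset hx hx0 {v₁, a, w, z} fun u hu => by
    simpa using h2 hu
  have hz' := mul_apply_le_sum_of_neighborSet_subset hx hx0 {v₀, v₁, v₂, w, b} fun u hu => by
    simpa using hz hu
  simp only [Multiset.insert_eq_cons, Multiset.map_cons, Multiset.map_singleton, Multiset.sum_cons,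
    Multiset.sum_singleton] at hv₀ hv₂ hz'
  have hv₁ : 0 ≤ x v₁ := hx0 v₁
  linarith [hmono v₀, hmono v₂, hmono z]

/-- The vertices `w`, `z`, `a` and `b` play the roles of `vₖ`, `vₙ₋₁`, `v₃` and `vₙ₋₂`. -/
theorem stmt_11_general [DecidableRel G.Adj] (hG : G.Connected)
    (h0 : G.neighborSet v₀ ⊆ {v₁, z}) (h2 : G.neighborSet v₂ ⊆ {v₁, a, w, z})
    (hz : G.neighborSet z ⊆ {v₀, v₁, v₂, w, b})
    (ha : insert a (G.neighborSet a) ⊆ insert w (G.neighborSet w))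
    (hb : insert b (G.neighborSet b) ⊆ insert w (G.neighborSet w))
    (hw : 9 ≤ G.degree w) (h1w : Gᶜ.Adj v₁ w) :
    qIndex G <
      qIndex (SimpleGraph.fromEdgeSet ((G.edgeSet \ {s(v₂, z)}) ∪ {s(v₁, w)})) := by
  have := hG.nonempty
  obtain ⟨x, hx0, hxne, hx⟩ := exists_nonneg_signlessLaplacian_mulVec_eq_qIndex_smul G
  have hdeg : (9 : ℝ) ≤ G.degree w := by exact_mod_cast hw
  have hq : (G.degree w : ℝ) + 1 ≤ qIndex G := degree_add_one_le_qIndex G (by omega)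
  have hlt : x v₂ + x z < x v₁ + x w :=
    apply_add_apply_lt_of_neighborSet_subset hx hx0 (by linarith) h0 h2 hz
      (apply_le_apply_of_closedNeighborSet_subset hx hx0 ha (by linarith))
      (apply_le_apply_of_closedNeighborSet_subset hx hx0 hb (by linarith))
      (apply_pos_of_connected hx hx0 hxne hG w)
  exact qIndex_lt_qIndex_of_replace_edge hx hxne h1w
    (pow_lt_pow_left₀ hlt (add_nonneg (hx0 v₂) (hx0 z)) two_ne_zero)

end EdgeReplacement

/-- for the maximal outer-planar graph of type `D_1` with `Δ = n - 3`,
if `n ≥ 12` then deleting the edge `v_2 v_{n-1}` and adding the edge `v_1 v_k`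
increases the `Q`-index. -/
theorem stmt_11 (n k : ℕ) (hn : 7 ≤ n) (hk1 : 4 ≤ k) (hk2 : k ≤ n - 3)
    (G : SimpleGraph (Fin n))
    (h0 : G.neighborSet ⟨0, by omega⟩ = {⟨1, by omega⟩, ⟨n - 1, by omega⟩})
    (h1 : G.neighborSet ⟨1, by omega⟩ =
      {⟨0, by omega⟩, ⟨2, by omega⟩, ⟨n - 1, by omega⟩})
    (h2 : G.neighborSet ⟨2, by omega⟩ =
      {⟨1, by omega⟩, ⟨3, by omega⟩, ⟨k, by omega⟩, ⟨n - 1, by omega⟩})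
    (hlast : G.neighborSet ⟨n - 1, by omega⟩ =
      {⟨0, by omega⟩, ⟨1, by omega⟩, ⟨2, by omega⟩, ⟨k, by omega⟩, ⟨n - 2, by omega⟩})
    (hk' : G.neighborSet ⟨k, by omega⟩ =
      {u : Fin n | 2 ≤ u.val ∧ u ≠ ⟨k, by omega⟩})
    (hn12 : 12 ≤ n) :
    qIndex G <
      qIndex (SimpleGraph.fromEdgeSet
        ((G.edgeSet \ {s((⟨2, by omega⟩ : Fin n), (⟨n - 1, by omega⟩ : Fin n))}) ∪
          {s((⟨1, by omega⟩ : Fin n), (⟨k, by omega⟩ : Fin n))})) := by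
  classical
  have hcompl : ({⟨0, by omega⟩, ⟨1, by omega⟩} : Set (Fin n))ᶜ ⊆
      insert ⟨k, by omega⟩ (G.neighborSet ⟨k, by omega⟩) := by
    rw [hk']
    grind
  have hclosed (u : Fin n) (hu : 3 ≤ u.val) (hu' : u.val ≤ n - 2) :
      insert u (G.neighborSet u) ⊆ insert ⟨k, by omega⟩ (G.neighborSet ⟨k, by omega⟩) :=
    closedNeighborSet_subset_of_compl_subset hcompl (by grind) (by grind)
  have hconn : G.Connected := by
    refine connected_of_forall_adj_or_adj (w := ⟨k, by omega⟩) (z := ⟨n - 1, by omega⟩) ?_ ?_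
    all_goals
      simp only [← SimpleGraph.mem_neighborSet, hk', hlast]
      grind
  have hdeg : 9 ≤ G.degree ⟨k, by omega⟩ := by
    have hcard := card_le_ncard_add_degree_add_one hcompl
    rw [Set.ncard_pair (by simp), Fintype.card_fin] at hcard
    omega
  have hnonadj : Gᶜ.Adj ⟨1, by omega⟩ ⟨k, by omega⟩ := by
    rw [SimpleGraph.compl_adj, ← SimpleGraph.mem_neighborSet, h1]
    grind
  exact stmt_11_general hconn h0.subset h2.subset hlast.subset
    (hclosed _ le_rfl (by grind)) (hclosed _ (by grind) le_rfl) hdeg hnonadj
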